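/- Let X, Y be Banach spaces, N : X → Y with N(u) = S(u) + B(u,u), S a bounded linear bijection, B a bounded bilinear map such that for each u ∈ X the linear map w ↦ B(u,w) + B(w,u) is compact from X to Y. Suppose also that for each u ∈ X the operator G_u = S + B(u,·) + B(·,u) is injective. Then for every u ∈ X there exist open neighborhoods U ∋ u in X and V ∋ N(u) in Y such that N restricted to U is a bijection onto V. -/

import Mathlib

/-! The derivative of `N` at `u` is `G_u = S + B(u, ·) + B(·, u) = S ∘ (1 + T)` with
`T = S⁻¹ ∘ (B(u, ·) + B(·, u))` compact. If `G_u` is injective then `-1` is not an eigenvalue of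
`T`, so by the Fredholm alternative `1 + T` is invertible; hence `G_u` is invertible and the
inverse function theorem applies at `u`. -/

section

open Function

variable {𝕜 X Y : Type*} [NontriviallyNormedField 𝕜]
  [NormedAddCommGroup X] [NormedSpace 𝕜 X] [NormedAddCommGroup Y] [NormedSpace 𝕜 Y]

theorem isInvertible_of_bijective [CompleteSpace X] [CompleteSpace Y] {S : X →L[𝕜] Y}
    (hS : Bijective S) : S.IsInvertible :=
  ⟨.ofBijective S (LinearMap.ker_eq_bot.mpr hS.injective)
    (LinearMap.range_eq_top.mpr hS.surjective), ContinuousLinearEquiv.coe_ofBijective ..⟩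

theorem isUnit_one_add_of_isCompactOperator_of_injective [CompleteSpace X] {T : X →L[𝕜] X}
    (hT : IsCompactOperator T) (hinj : Injective (1 + T : X →L[𝕜] X)) :
    IsUnit (1 + T) := by
  have not_hasEigenvalue : ¬ Module.End.HasEigenvalue (T : Module.End 𝕜 X) (-1) := by
    intro h
    obtain ⟨v, hv⟩ := h.exists_hasEigenvector
    have hTv : T v = -v := by simpa using hv.apply_eq_smul
    exact hv.2 (hinj (by simp [hTv]))
  have mem_resolventSet : (-1 : 𝕜) ∈ resolventSet 𝕜 T :=
    (hT.hasEigenvalue_or_mem_resolventSet (neg_ne_zero.mpr one_ne_zero)).resolve_left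
      not_hasEigenvalue
  rw [← IsUnit.neg_iff, neg_add']
  simpa only [spectrum.mem_resolventSet_iff, map_neg, map_one] using mem_resolventSet

theorem isInvertible_add_of_isCompactOperator_of_injective [CompleteSpace X] {S K : X →L[𝕜] Y}
    (hS : S.IsInvertible) (hK : IsCompactOperator K) (hinj : Injective (S + K)) :
    (S + K).IsInvertible := by
  obtain ⟨e, rfl⟩ := hS
  let T : X →L[𝕜] X := (e.symm : Y →L[𝕜] X) ∘L K
  have factorization : (e : X →L[𝕜] Y) + K = (e : X →L[𝕜] Y) ∘L (1 + T) := by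
    ext x
    simp [T]
  rw [factorization] at hinj ⊢
  obtain ⟨g, hg⟩ := isUnit_one_add_of_isCompactOperator_of_injective
    (hK.clm_comp (e.symm : Y →L[𝕜] X)) (Injective.of_comp hinj)
  exact ContinuousLinearMap.isInvertible_equiv_comp.mpr ⟨ContinuousLinearEquiv.ofUnit g, hg⟩

theorem hasStrictFDerivAt_bilinear_diag (B : X →L[𝕜] X →L[𝕜] Y) (u : X) :
    HasStrictFDerivAt (fun x => B x x) (B u + B.flip u) u :=
  B.hasStrictFDerivAt_of_bilinear (hasStrictFDerivAt_id u) (hasStrictFDerivAt_id u)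

theorem exists_bijOn_isOpen_of_hasStrictFDerivAt [CompleteSpace X] {f : X → Y}
    {f' : X →L[𝕜] Y} {a : X} (hf : HasStrictFDerivAt f f' a) (hf' : f'.IsInvertible) :
    ∃ (U : Set X) (V : Set Y), IsOpen U ∧ IsOpen V ∧ a ∈ U ∧ f a ∈ V ∧ Set.BijOn f U V := by
  obtain ⟨e, rfl⟩ := hf'
  let Φ := hf.toOpenPartialHomeomorph f
  exact ⟨Φ.source, Φ.target, Φ.open_source, Φ.open_target,
    hf.mem_toOpenPartialHomeomorph_source, hf.image_mem_toOpenPartialHomeomorph_target, Φ.bijOn⟩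

theorem navier_stokes_local_bijection_general [CompleteSpace X] {S : X →L[𝕜] Y}
    (hS : S.IsInvertible) (B : X →L[𝕜] X →L[𝕜] Y) {u : X}
    (hcpt : IsCompactOperator (fun w => B u w + B w u))
    (hinj : Injective (fun w => S w + B u w + B w u)) :
    ∃ (U : Set X) (V : Set Y), IsOpen U ∧ IsOpen V ∧ u ∈ U ∧
      (S u + B u u) ∈ V ∧ Set.BijOn (fun x => S x + B x x) U V := by
  have derivative : HasStrictFDerivAt (fun x => S x + B x x) (S + (B u + B.flip u)) u :=
    S.hasStrictFDerivAt.add (hasStrictFDerivAt_bilinear_diag B u)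
  have derivative_injective : Injective (S + (B u + B.flip u)) := by
    intro v w hvw
    exact hinj (by simpa [add_assoc] using hvw)
  exact exists_bijOn_isOpen_of_hasStrictFDerivAt derivative
    (isInvertible_add_of_isCompactOperator_of_injective hS hcpt derivative_injective)

end

/-- Main abstract result: if N(u) = S(u) + B(u,u) with S a bounded linear bijection of
    Banach spaces, B bounded bilinear such that w ↦ B(u,w) + B(w,u) is compact and
    S + B(u,·) + B(·,u) is injective for each u, then N is a local bijection around
    every point u. -/
theorem navier_stokes_local_bijection
    {X Y : Type*} [NormedAddCommGroup X] [NormedSpace ℝ X] [CompleteSpace X]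
    [NormedAddCommGroup Y] [NormedSpace ℝ Y] [CompleteSpace Y]
    (S : X →L[ℝ] Y) (hS : Function.Bijective S)
    (B : X →L[ℝ] X →L[ℝ] Y)
    (hcpt : ∀ u : X, IsCompactOperator (fun w => B u w + B w u))
    (hinj : ∀ u : X, Function.Injective (fun w => S w + B u w + B w u)) :
    ∀ u : X, ∃ (U : Set X) (V : Set Y), IsOpen U ∧ IsOpen V ∧ u ∈ U ∧
      (S u + B u u) ∈ V ∧ Set.BijOn (fun x => S x + B x x) U V :=
  fun u => navier_stokes_local_bijection_general (isInvertible_of_bijective hS) B (hcpt u) (hinj u)
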